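/- arXiv:2402.07740 — 4 statements merged into one kernel-verified Lean document; each statement's English description precedes it below -/
import Mathlib

section
/- For every real x > 0, G(x) = lim_{n→∞} (n+1)^{(x−1)(x−2)/2} · (n!)^{x−1} · ∏_{k=0}^{n−1} Γ(k+1)/Γ(k+x) (an Euler-type limit representation of the double gamma function). -/
open Real

/-- The double gamma function, defined by its Weierstrass product. -/
noncomputable def doubleGamma (x : ℝ) : ℝ :=
  (2 * π) ^ ((x - 1) / 2) *
    Real.exp (-(x - 1) * x / 2 - Real.eulerMascheroniConstant * (x - 1) ^ 2 / 2) *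
    ∏' n : ℕ,
      ((1 + (x - 1) / (n + 1)) ^ (n + 1) *
        Real.exp (-(x - 1) + (x - 1) ^ 2 / (2 * (n + 1))))

open Filter Topology in
lemma dg_log3 (u : ℝ) (h : |u| ≤ 1/2) : |Real.log (1 + u) - u + u^2/2| ≤ 2 * |u|^3 := by
  have h1 := Real.abs_log_sub_add_sum_range_le (x := -u) (by rw [abs_neg]; linarith) 2
  simp only [Finset.sum_range_succ, Finset.sum_range_zero, abs_neg, sub_neg_eq_add] at h1
  have e : Real.log (1 + u) - u + u^2/2 = (0 + (-u) ^ (0 + 1) / (((0:ℕ):ℝ) + 1) + (-u) ^ (1 + 1) / (((1:ℕ):ℝ) + 1)) + Real.log (1 + u) := by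
    push_cast; ring
  rw [e]
  refine h1.trans ?_
  rw [div_le_iff₀ (by linarith)]
  have : 0 ≤ |u|^3 := by positivity
  norm_num
  nlinarith

open Filter Topology in
lemma dg_half (r : ℕ → ℝ) (c : ℝ) (N : ℕ) (hN : 0 < N) (h0 : Tendsto r atTop (𝓝 0))
    (h : ∀ n ≥ N, (n:ℝ) * (n + 1) * (r n - r (n + 1)) ≤ c) : ∀ n ≥ N, (n:ℝ) * r n ≤ c := by
  have key : ∀ n ≥ N, ∀ k : ℕ, r n - c / n ≤ r (n + k) - c / ((n + k : ℕ) : ℝ) := by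
    intro n hn k
    induction k with
    | zero => simp
    | succ k ih =>
      refine ih.trans ?_
      have hh := h (n + k) (by omega)
      have hp : (0:ℝ) < ((n + k : ℕ) : ℝ) := by exact_mod_cast (by omega : 0 < n + k)
      rw [← add_assoc]
      push_cast at *
      set m : ℝ := (n:ℝ) + k
      have : c / m - c / (m + 1) = c / (m * (m + 1)) := by field_simp; ring
      have h2 : r (n + k) - r (n + k + 1) ≤ c / (m * (m + 1)) := by
        rw [le_div_iff₀ (by positivity)]; linarith
      linarith
  intro n hn
  have hp : (0:ℝ) < n := by exact_mod_cast (by omega : 0 < n)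
  have t : Tendsto (fun k : ℕ => r (n + k) - c / ((n + k : ℕ) : ℝ)) atTop (𝓝 (0 - 0)) := by
    have t1 : Tendsto (fun k : ℕ => n + k) atTop atTop := by
      simpa [add_comm] using tendsto_add_atTop_nat n
    exact (h0.comp t1).sub ((tendsto_const_div_atTop_nhds_zero_nat c).comp t1)
  have := ge_of_tendsto' t (key n hn)
  have h3 : r n ≤ c / n := by linarith
  rw [le_div_iff₀ hp] at h3
  linarith

open Filter Topology in
lemma dg_stolz (r : ℕ → ℝ) (c : ℝ) (h0 : Tendsto r atTop (𝓝 0))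
    (h : Tendsto (fun n : ℕ => (n:ℝ) * (n + 1) * (r n - r (n + 1))) atTop (𝓝 c)) :
    Tendsto (fun n : ℕ => (n:ℝ) * r n) atTop (𝓝 c) := by
  rw [Metric.tendsto_atTop] at h ⊢
  intro ε hε
  obtain ⟨N, hN⟩ := h (ε/2) (by positivity)
  refine ⟨N + 1, fun n hn => ?_⟩
  have a := dg_half r (c + ε/2) (N + 1) (by omega) h0 (fun m hm => by
    have := hN m (by omega)
    rw [Real.dist_eq, abs_lt] at this
    linarith) n hn
  have b := dg_half (fun n => - r n) (-c + ε/2) (N + 1) (by omega) (by simpa using h0.neg)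
    (fun m hm => by
    have := hN m (by omega)
    rw [Real.dist_eq, abs_lt] at this
    nlinarith) n hn
  rw [Real.dist_eq, abs_lt]
  constructor <;> linarith

lemma dg_logGamma_succ (x : ℝ) (hx : 0 < x) (n : ℕ) :
    Real.log (Real.Gamma (x + (n + 1 : ℕ))) = Real.log (x + n) + Real.log (Real.Gamma (x + n)) := by
  have hp : 0 < x + n := by positivity
  push_cast
  rw [← add_assoc, Real.Gamma_add_one hp.ne', Real.log_mul hp.ne' (Real.Gamma_pos_of_pos hp).ne']

lemma dg_logGamma (x : ℝ) (hx : 0 < x) (n : ℕ) :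
    Real.log (Real.Gamma (x + n)) = Real.log (Real.Gamma x) + ∑ m ∈ Finset.range n, Real.log (x + m) := by
  induction n with
  | zero => simp
  | succ n ih => rw [dg_logGamma_succ x hx, ih, Finset.sum_range_succ]; ring

lemma dg_logfact (n : ℕ) : Real.log ((n + 1).factorial : ℝ) = Real.log (n + 1) + Real.log (n.factorial : ℝ) := by
  rw [Nat.factorial_succ]; push_cast
  rw [Real.log_mul (by positivity) (by positivity)]

open Filter Topology in
lemma dg_r0 (x : ℝ) (hx : 0 < x) : Tendsto (fun n : ℕ => Real.log (Real.Gamma (x + n))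
    - Real.log (n.factorial : ℝ) - (x - 1) * Real.log n) atTop (𝓝 0) := by
  have h1 := Real.BohrMollerup.tendsto_log_gamma hx
  have h2 := (Real.tendsto_log_comp_add_sub_log x).comp (tendsto_natCast_atTop_atTop (R := ℝ))
  have := (h1.const_sub (Real.log (Real.Gamma x))).sub h2
  simp only [sub_self] at this
  refine this.congr fun n => ?_
  rw [dg_logGamma x hx, Real.BohrMollerup.logGammaSeq, Finset.sum_range_succ]
  simp only [Function.comp]
  rw [add_comm (n:ℝ) x]
  ring

open Filter Topology in
lemma dg_r1 (x : ℝ) (hx : 0 < x) : Tendsto (fun n : ℕ => (n:ℝ) * (Real.log (Real.Gamma (x + n))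
    - Real.log (n.factorial : ℝ) - (x - 1) * Real.log n)) atTop (𝓝 (x * (x - 1) / 2)) := by
  apply dg_stolz _ _ (dg_r0 x hx)
  have hinv : Tendsto (fun n : ℕ => ((n:ℝ))⁻¹) atTop (𝓝 0) := tendsto_inv_atTop_nhds_zero_nat
  have hlim : Tendsto (fun n : ℕ => (1 + (n:ℝ)⁻¹) * (x * (x - 1) / 2)) atTop (𝓝 (x * (x - 1) / 2)) := by
    simpa using (hinv.const_add 1).mul_const (x * (x - 1) / 2)
  have hb : Tendsto (fun n : ℕ => 2 * ((2 * x ^ 3 + 2 * x) * (n:ℝ)⁻¹)) atTop (𝓝 0) := by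
    simpa using (hinv.const_mul (2 * x ^ 3 + 2 * x)).const_mul 2
  have hdiff : Tendsto (fun n : ℕ => (n:ℝ) * (n + 1) * ((Real.log (Real.Gamma (x + n))
    - Real.log (n.factorial : ℝ) - (x - 1) * Real.log n) - (Real.log (Real.Gamma (x + (n + 1 : ℕ)))
    - Real.log ((n + 1).factorial : ℝ) - (x - 1) * Real.log (n + 1 : ℕ))) - (1 + (n:ℝ)⁻¹) * (x * (x - 1) / 2)) atTop (𝓝 0) := by
    apply squeeze_zero_norm' _ hb
    filter_upwards [eventually_ge_atTop 2, (tendsto_natCast_atTop_atTop (R := ℝ)).eventually_ge_atTop (2 * x)] with n hn hn2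
    have hp : (2:ℝ) ≤ n := by exact_mod_cast hn
    have hp0 : (0:ℝ) < n := by linarith
    rw [dg_logGamma_succ x hx, dg_logfact]
    have e1 : Real.log (x + n) = Real.log n + Real.log (1 + x * (n:ℝ)⁻¹) := by
      rw [← Real.log_mul hp0.ne' (by positivity)]; congr 1; field_simp; ring
    have e2 : Real.log ((n:ℝ) + 1) = Real.log n + Real.log (1 + (n:ℝ)⁻¹) := by
      rw [← Real.log_mul hp0.ne' (by positivity)]; congr 1; field_simp
    push_cast
    rw [e1, e2]
    have hu : (n:ℝ) * (n:ℝ)⁻¹ = 1 := mul_inv_cancel₀ hp0.ne'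
    have hu0 : 0 < (n:ℝ)⁻¹ := by positivity
    have hu1 : (n:ℝ)⁻¹ ≤ 1/2 := by rw [inv_le_comm₀ hp0 (by norm_num)]; linarith
    have hxu : x * (n:ℝ)⁻¹ ≤ 1/2 := by rw [mul_inv_le_iff₀ hp0]; linarith
    set u := (n:ℝ)⁻¹ with hudef
    have b1 := dg_log3 (x * u) (by rw [abs_of_pos (by positivity)]; exact hxu)
    have b2 := dg_log3 u (by rw [abs_of_pos (by positivity)]; exact hu1)
    rw [abs_of_pos (show 0 < x * u by positivity)] at b1
    rw [abs_of_pos hu0] at b2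
    set A := Real.log (1 + x * u)
    set B := Real.log (1 + u)
    have hn_eq : (n:ℝ) = u⁻¹ := by rw [hudef, inv_inv]
    have e3 : (n:ℝ) * (n + 1) * ((Real.log (Real.Gamma (x + n)) - Real.log (n.factorial : ℝ) - (x - 1) * Real.log n)
       - (Real.log n + A + Real.log (Real.Gamma (x + n)) - (Real.log n + B + Real.log (n.factorial : ℝ)) - (x - 1) * (Real.log n + B)))
       - (1 + u) * (x * (x - 1) / 2) = (1 + u) * (u⁻¹ ^ 2 * (x * (B - u + u^2/2) - (A - x * u + (x*u)^2/2))) := by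
      rw [hn_eq]; field_simp; ring
    rw [e3, Real.norm_eq_abs, abs_mul, abs_mul, abs_of_pos (show 0 < 1 + u by positivity),
      abs_of_pos (show 0 < u⁻¹^2 by positivity)]
    have b3 : |x * (B - u + u^2/2) - (A - x * u + (x*u)^2/2)| ≤ x * (2 * u^3) + 2 * (x * u)^3 := by
      refine (abs_sub _ _).trans ?_
      rw [abs_mul, abs_of_pos hx]
      gcongr
    calc (1 + u) * (u⁻¹ ^ 2 * |x * (B - u + u^2/2) - (A - x * u + (x*u)^2/2)|)
        ≤ 2 * (u⁻¹ ^ 2 * (x * (2 * u^3) + 2 * (x * u)^3)) := by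
          gcongr; linarith
      _ = _ := by field_simp; ring
  have := hdiff.add hlim
  simp only [zero_add, sub_add_cancel] at this
  exact this

lemma dg_finite (x : ℝ) (hx : 0 < x) (n : ℕ) :
    ∑ k ∈ Finset.range n, (Real.log (k.factorial : ℝ) - Real.log (Real.Gamma (x + k)))
      = n * (Real.log (n.factorial : ℝ) - Real.log (Real.Gamma (x + n)))
        + ∑ k ∈ Finset.range n, ((k:ℝ) + 1) * (Real.log (x + k) - Real.log (k + 1)) := by
  induction n with
  | zero => simp
  | succ n ih =>
    rw [Finset.sum_range_succ, Finset.sum_range_succ, ih, dg_logGamma_succ x hx, dg_logfact]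
    push_cast; ring

lemma dg_term_pos (x : ℝ) (hx : 0 < x) (n : ℕ) : 0 < 1 + (x - 1) / ((n:ℝ) + 1) := by
  have : 1 + (x - 1) / ((n:ℝ) + 1) = (x + n) / (n + 1) := by field_simp; ring
  rw [this]; positivity

lemma dg_term_log (x : ℝ) (hx : 0 < x) (n : ℕ) :
    Real.log ((1 + (x - 1) / ((n:ℝ) + 1)) ^ (n + 1) *
        Real.exp (-(x - 1) + (x - 1) ^ 2 / (2 * ((n:ℝ) + 1))))
    = ((n:ℝ) + 1) * Real.log (1 + (x - 1) / ((n:ℝ) + 1)) - (x - 1) + (x - 1) ^ 2 / (2 * ((n:ℝ) + 1)) := by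
  have := dg_term_pos x hx n
  rw [Real.log_mul (by positivity) (by positivity), Real.log_exp, Real.log_pow]
  push_cast; ring

open Filter Topology in
lemma dg_mult (x : ℝ) (hx : 0 < x) : Multipliable (fun n : ℕ =>
      ((1 + (x - 1) / ((n:ℝ) + 1)) ^ (n + 1) *
        Real.exp (-(x - 1) + (x - 1) ^ 2 / (2 * ((n:ℝ) + 1))))) := by
  apply Real.multipliable_of_summable_log
  · intro n
    have := dg_term_pos x hx n
    positivity
  simp_rw [dg_term_log x hx]
  have hs : Summable (fun n : ℕ => 2 * |x - 1|^3 * (1 / ((n:ℝ) + 1)^2)) := by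
    apply Summable.mul_left
    have := (summable_nat_add_iff 1).2 (Real.summable_one_div_nat_pow.2 (one_lt_two))
    simpa using this
  apply Summable.of_norm_bounded_eventually_nat hs
  filter_upwards [(tendsto_natCast_atTop_atTop (R := ℝ)).eventually_ge_atTop (2 * |x - 1|)] with n hn
  have hp : (0:ℝ) < (n:ℝ) + 1 := by positivity
  have b := dg_log3 ((x - 1) / ((n:ℝ) + 1)) (by
    rw [abs_div, abs_of_pos hp, div_le_iff₀ hp]; linarith)
  have e : ((n:ℝ) + 1) * Real.log (1 + (x - 1) / ((n:ℝ) + 1)) - (x - 1) + (x - 1) ^ 2 / (2 * ((n:ℝ) + 1))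
    = ((n:ℝ) + 1) * (Real.log (1 + (x - 1) / ((n:ℝ) + 1)) - (x - 1) / ((n:ℝ) + 1) + ((x - 1) / ((n:ℝ) + 1))^2 / 2) := by
    field_simp
  rw [e, Real.norm_eq_abs, abs_mul, abs_of_pos hp]
  calc _ ≤ ((n:ℝ) + 1) * (2 * |(x - 1) / ((n:ℝ) + 1)|^3) := by gcongr
    _ = _ := by rw [abs_div, abs_of_pos hp]; field_simp

lemma dg_log_seq (x : ℝ) (hx : 0 < x) (n : ℕ) (hn : 0 < n) :
    Real.log (((n : ℝ) + 1) ^ ((x - 1) * (x - 2) / 2) * (Nat.factorial n : ℝ) ^ (x - 1) *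
          ∏ k ∈ Finset.range n, Real.Gamma (k + 1) / Real.Gamma (k + x))
    = ((x - 1) * (x - 2) / 2 * (Real.log (n + 1) - Real.log n)
      + (x - 1) * (Real.log (Stirling.stirlingSeq n) + Real.log 2 / 2)
      - (n:ℝ) * (Real.log (Real.Gamma (x + n)) - Real.log (n.factorial : ℝ) - (x - 1) * Real.log n)
      - (x - 1)^2 / 2 * ((harmonic n : ℝ) - Real.log n))
      + Real.log (∏ k ∈ Finset.range n, ((1 + (x - 1) / ((k:ℝ) + 1)) ^ (k + 1) *
        Real.exp (-(x - 1) + (x - 1) ^ 2 / (2 * ((k:ℝ) + 1))))) := by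
  have hg : ∀ k : ℕ, 0 < Real.Gamma (k + 1) / Real.Gamma (k + x) := fun k =>
    div_pos (Real.Gamma_pos_of_pos (by positivity)) (Real.Gamma_pos_of_pos (by positivity))
  have hn0 : (0:ℝ) < n := by exact_mod_cast hn
  have hprod : 0 < ∏ k ∈ Finset.range n, Real.Gamma (k + 1) / Real.Gamma (k + x) :=
    Finset.prod_pos fun k _ => hg k
  rw [Real.log_mul (by positivity) hprod.ne', Real.log_mul (by positivity) (by positivity),
    Real.log_rpow (by positivity), Real.log_rpow (by positivity),
    Real.log_prod (fun k _ => (hg k).ne'), Real.log_prod (fun k _ => by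
      have := dg_term_pos x hx k
      positivity)]
  have s1 : ∑ k ∈ Finset.range n, Real.log (Real.Gamma (k + 1) / Real.Gamma (k + x))
     = ∑ k ∈ Finset.range n, (Real.log (k.factorial : ℝ) - Real.log (Real.Gamma (x + k))) := by
    refine Finset.sum_congr rfl fun k _ => ?_
    rw [Real.log_div (Real.Gamma_pos_of_pos (by positivity)).ne' (Real.Gamma_pos_of_pos (by positivity)).ne',
      Real.Gamma_nat_eq_factorial, add_comm x]
  have s2 : ∑ k ∈ Finset.range n, Real.log ((1 + (x - 1) / ((k:ℝ) + 1)) ^ (k + 1) *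
        Real.exp (-(x - 1) + (x - 1) ^ 2 / (2 * ((k:ℝ) + 1))))
     = ∑ k ∈ Finset.range n, ((k:ℝ) + 1) * (Real.log (x + k) - Real.log (k + 1)) - n * (x - 1)
       + (x - 1)^2 / 2 * (harmonic n : ℝ) := by
    have hh : (harmonic n : ℝ) = ∑ k ∈ Finset.range n, ((k:ℝ) + 1)⁻¹ := by
      simp [harmonic]
    have hc : (n:ℝ) * (x - 1) = ∑ k ∈ Finset.range n, (x - 1) := by
      rw [Finset.sum_const, Finset.card_range, nsmul_eq_mul]
    rw [hh, hc, Finset.mul_sum, ← Finset.sum_sub_distrib, ← Finset.sum_add_distrib]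
    refine Finset.sum_congr rfl fun k _ => ?_
    rw [dg_term_log x hx, ← Real.log_div (by positivity) (by positivity)]
    have : 1 + (x - 1) / ((k:ℝ) + 1) = (x + k) / (k + 1) := by field_simp; ring
    rw [this]
    congr 1
    field_simp
  rw [s1, s2, dg_finite x hx]
  have hst : Real.log (Stirling.stirlingSeq n) = Real.log (n.factorial : ℝ) - (Real.log 2 / 2 + Real.log n / 2 + n * (Real.log n - 1)) := by
    rw [Stirling.log_stirlingSeq_formula, Real.log_mul (by norm_num) hn0.ne', Real.log_div hn0.ne' (by positivity), Real.log_exp]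
    ring
  rw [hst]
  ring

open Filter Topology in
theorem doubleGamma_euler_limit (x : ℝ) (hx : 0 < x) :
    Tendsto
      (fun n : ℕ =>
        ((n : ℝ) + 1) ^ ((x - 1) * (x - 2) / 2) * (Nat.factorial n : ℝ) ^ (x - 1) *
          ∏ k ∈ Finset.range n, Real.Gamma (k + 1) / Real.Gamma (k + x))
      atTop (𝓝 (doubleGamma x)) := by
  have hW := (dg_mult x hx).hasProd.tendsto_prod_nat
  have hS : Tendsto (fun n => Real.log (Stirling.stirlingSeq n)) atTop (𝓝 (Real.log (√π))) :=
    Stirling.tendsto_stirlingSeq_sqrt_pi.log (by positivity)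
  have hE := ((((Real.tendsto_log_nat_add_one_sub_log).const_mul ((x - 1) * (x - 2) / 2)).add
    ((hS.add_const (Real.log 2 / 2)).const_mul (x - 1))).sub (dg_r1 x hx)).sub
    (Real.tendsto_harmonic_sub_log.const_mul ((x - 1)^2 / 2))
  have hT := ((Real.continuous_exp.tendsto _).comp hE).mul hW
  have hval : doubleGamma x = Real.exp ((x - 1) * (x - 2) / 2 * 0 + (x - 1) * (Real.log (√π) + Real.log 2 / 2)
      - x * (x - 1) / 2 - (x - 1)^2 / 2 * Real.eulerMascheroniConstant) * ∏' n : ℕ,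
      ((1 + (x - 1) / ((n:ℝ) + 1)) ^ (n + 1) *
        Real.exp (-(x - 1) + (x - 1) ^ 2 / (2 * ((n:ℝ) + 1)))) := by
    unfold doubleGamma
    congr 1
    rw [Real.rpow_def_of_pos (by positivity), ← Real.exp_add, Real.log_sqrt (by positivity),
      Real.log_mul (by norm_num) (by positivity)]
    congr 1
    ring
  rw [hval]
  refine hT.congr' ?_
  filter_upwards [eventually_gt_atTop 0] with n hn
  have hl := dg_log_seq x hx n hn
  have hp1 : 0 < ((n : ℝ) + 1) ^ ((x - 1) * (x - 2) / 2) * (Nat.factorial n : ℝ) ^ (x - 1) *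
          ∏ k ∈ Finset.range n, Real.Gamma (k + 1) / Real.Gamma (k + x) := by
    refine mul_pos (by positivity) (Finset.prod_pos fun k _ => ?_)
    exact div_pos (Real.Gamma_pos_of_pos (by positivity)) (Real.Gamma_pos_of_pos (by positivity))
  have hp2 : 0 < ∏ k ∈ Finset.range n, ((1 + (x - 1) / ((k:ℝ) + 1)) ^ (k + 1) *
        Real.exp (-(x - 1) + (x - 1) ^ 2 / (2 * ((k:ℝ) + 1)))) := by
    refine Finset.prod_pos fun k _ => ?_
    have := dg_term_pos x hx k
    positivity
  rw [← Real.exp_log hp1, hl, Real.exp_add, Real.exp_log hp2]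
  rfl
end

section
/- Alekseevsky's integral representation: for every real x > 0, ln G(x) = ∫_0^∞ (e^{−u}/u) · ( (x−1)(x−2)/2 − (x−1)/(1 − e^{−u}) + (1 − e^{−(x−1)u})/(1 − e^{−u})² ) du. -/
open Real

namespace DGaux

open MeasureTheory Filter Topology

noncomputable def T (z : ℝ) (n : ℕ) : ℝ :=
  ((n : ℝ) + 1) * Real.log (1 + z / (n + 1)) - z + z ^ 2 / (2 * (n + 1))

lemma summable_T (z : ℝ) : Summable (T z) := by
  have hs : Summable (fun n : ℕ => (2 * |z| ^ 3) * (1 / ((n : ℝ) + 1) ^ 2)) := by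
    apply Summable.mul_left
    have := (summable_nat_add_iff 1).2 (Real.summable_one_div_nat_pow.2 (one_lt_two))
    simpa using this
  apply Summable.of_norm_bounded_eventually_nat hs
  filter_upwards [eventually_ge_atTop (Nat.ceil (2 * |z|))] with n hn
  have hn' : 2 * |z| ≤ (n : ℝ) := (Nat.le_ceil _).trans (by exact_mod_cast hn)
  have hp : (0 : ℝ) < n + 1 := by positivity
  have hx : |-z / ((n : ℝ) + 1)| ≤ 1 / 2 := by
    rw [abs_div, abs_neg, abs_of_pos hp, div_le_iff₀ hp]; linarith
  have h := Real.abs_log_sub_add_sum_range_le (lt_of_le_of_lt hx (by norm_num)) 2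
  have h2 : |-z / ((n : ℝ) + 1)| ^ 3 / (1 - |-z / ((n : ℝ) + 1)|) ≤
      2 * |-z / ((n : ℝ) + 1)| ^ 3 := by
    rw [div_le_iff₀ (by linarith)]
    have : 0 ≤ |-z / ((n : ℝ) + 1)| ^ 3 := by positivity
    nlinarith
  have h3 := h.trans h2
  have e : T z n = ((n : ℝ) + 1) * (∑ i ∈ Finset.range 2, (-z / ((n : ℝ) + 1)) ^ (i + 1) / (i + 1) +
      Real.log (1 - -z / ((n : ℝ) + 1))) := by
    have : (1 - -z / ((n : ℝ) + 1)) = 1 + z / (n + 1) := by ring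
    rw [this, T]
    simp only [Finset.sum_range_succ, Finset.sum_range_zero]
    push_cast
    field_simp
    ring
  rw [e, Real.norm_eq_abs, abs_mul, abs_of_pos hp]
  calc _ ≤ ((n : ℝ) + 1) * (2 * |-z / ((n : ℝ) + 1)| ^ 3) := by gcongr
    _ = _ := by
      rw [abs_div, abs_neg, abs_of_pos hp]; field_simp

lemma log_one_add_div (n : ℕ) (z : ℝ) (hz : -1 < z) :
    Real.log (1 + z / ((n : ℝ) + 1)) = Real.log (n + 1 + z) - Real.log (n + 1) := by
  have hp : (0 : ℝ) < n + 1 := by positivity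
  have : (0 : ℝ) ≤ n := by positivity
  rw [← Real.log_div (by linarith) hp.ne']
  congr 1
  field_simp

lemma sum_T1 (N : ℕ) : ∑ n ∈ Finset.range N, T 1 n =
    N * Real.log (N + 1) - Real.log (N.factorial) - N + (harmonic N : ℝ) / 2 := by
  induction N with
  | zero => simp
  | succ k ih =>
    rw [Finset.sum_range_succ, ih, T, log_one_add_div k 1 (by norm_num), Nat.factorial_succ,
      harmonic_succ]
    push_cast
    rw [Real.log_mul (by positivity) (by positivity)]
    field_simp
    ring

lemma sum_T2 (N : ℕ) : ∑ n ∈ Finset.range N, T 2 n =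
    2 * (∑ n ∈ Finset.range N, T 1 n) + (harmonic N : ℝ) + N * Real.log (N + 2)
      - (N + 1) * Real.log (N + 1) := by
  induction N with
  | zero => simp
  | succ k ih =>
    rw [Finset.sum_range_succ, ih, Finset.sum_range_succ, T, T,
      log_one_add_div k 1 (by norm_num), log_one_add_div k 2 (by norm_num), harmonic_succ]
    push_cast
    have e1 : (k : ℝ) + 1 + 1 = k + 2 := by ring
    have e2 : (k : ℝ) + 1 + 2 = k + 3 := by ring
    rw [e1, e2]
    field_simp
    ring

lemma tendsto_mul_log (t : ℝ) :
    Tendsto (fun N : ℕ => (N : ℝ) * Real.log (1 + t / N)) atTop (𝓝 t) :=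
  (Real.tendsto_mul_log_one_add_div_atTop t).comp tendsto_natCast_atTop_atTop

lemma tsum_T1 : ∑' n, T 1 n = 1 - Real.log (2 * π) / 2 + Real.eulerMascheroniConstant / 2 := by
  refine tendsto_nhds_unique (summable_T 1).hasSum.tendsto_sum_nat ?_
  have hst : Tendsto (fun N => Real.log (Stirling.stirlingSeq N)) atTop (𝓝 (Real.log (√π))) :=
    Stirling.tendsto_stirlingSeq_sqrt_pi.log (by positivity)
  have := (((tendsto_mul_log 1).sub hst).sub_const (Real.log 2 / 2)).add
    (Real.tendsto_harmonic_sub_log.div_const 2)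
  have e : 1 - Real.log (√π) - Real.log 2 / 2 + Real.eulerMascheroniConstant / 2 =
    1 - Real.log (2 * π) / 2 + Real.eulerMascheroniConstant / 2 := by
    rw [Real.log_sqrt (by positivity), Real.log_mul (by norm_num) (by positivity)]; ring
  rw [← e]
  refine this.congr' ?_
  filter_upwards [eventually_ge_atTop 1] with N hN
  have hp : (0 : ℝ) < N := by exact_mod_cast hN
  have e1 : 1 + 1 / (N : ℝ) = (N + 1) / N := by field_simp
  rw [sum_T1, Stirling.log_stirlingSeq_formula, e1, Real.log_div (by positivity) (by positivity),
    Real.log_div (by positivity) (by positivity), Real.log_mul (by positivity) (by positivity),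
    Real.log_exp]
  ring

lemma tsum_T2 : ∑' n, T 2 n = 2 * (∑' n, T 1 n) + Real.eulerMascheroniConstant + 1 := by
  refine tendsto_nhds_unique (summable_T 2).hasSum.tendsto_sum_nat ?_
  have := (((summable_T 1).hasSum.tendsto_sum_nat.const_mul 2).add
    Real.tendsto_harmonic_sub_log_add_one).add ((tendsto_mul_log 2).sub (tendsto_mul_log 1))
  have e : (2 : ℝ) - 1 = 1 := by norm_num
  rw [e] at this
  refine this.congr' ?_
  filter_upwards [eventually_ge_atTop 1] with N hN
  have hp : (0 : ℝ) < N := by exact_mod_cast hN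
  have e1 : 1 + 1 / (N : ℝ) = (N + 1) / N := by field_simp
  have e2 : 1 + 2 / (N : ℝ) = (N + 2) / N := by field_simp
  rw [sum_T2, e1, e2, Real.log_div (by positivity) (by positivity),
    Real.log_div (by positivity) (by positivity)]
  ring

lemma log_doubleGamma (x : ℝ) (hx : 0 < x) : Real.log (doubleGamma x) =
    (x - 1) / 2 * Real.log (2 * π) + (-(x - 1) * x / 2
      - Real.eulerMascheroniConstant * (x - 1) ^ 2 / 2) + ∑' n, T (x - 1) n := by
  have hpos : ∀ n : ℕ, 0 < 1 + (x - 1) / ((n : ℝ) + 1) := by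
    intro n
    have hp : (0 : ℝ) < n + 1 := by positivity
    have : (0 : ℝ) ≤ n := by positivity
    have : 1 + (x - 1) / ((n : ℝ) + 1) = (n + x) / (n + 1) := by field_simp; ring
    rw [this]; positivity
  have hlog : ∀ n : ℕ, Real.log ((1 + (x - 1) / ((n : ℝ) + 1)) ^ (n + 1) *
        Real.exp (-(x - 1) + (x - 1) ^ 2 / (2 * (n + 1)))) = T (x - 1) n := by
    intro n
    rw [Real.log_mul (pow_pos (hpos n) _).ne' (Real.exp_pos _).ne', Real.log_exp, Real.log_pow, T]
    push_cast
    ring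
  have hprod := Real.rexp_tsum_eq_tprod (f := fun n : ℕ => (1 + (x - 1) / ((n : ℝ) + 1)) ^ (n + 1) *
        Real.exp (-(x - 1) + (x - 1) ^ 2 / (2 * (n + 1))))
    (fun n => mul_pos (pow_pos (hpos n) _) (Real.exp_pos _))
    (by simp only [hlog]; exact summable_T _)
  simp only [hlog] at hprod
  rw [doubleGamma, ← hprod, Real.log_mul (by positivity) (by positivity),
    Real.log_mul (by positivity) (by positivity), Real.log_exp, Real.log_exp,
    Real.log_rpow (by positivity)]

/-! Frullani -/

lemma frul_int (a b : ℝ) (ha : 0 < a) (hb : 0 < b) :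
    IntegrableOn (fun u : ℝ => u⁻¹ * (Real.exp (-(a * u)) - Real.exp (-(b * u)))) (Set.Ioi 0) := by
  wlog hab : a ≤ b generalizing a b
  · have := (this b a hb ha (le_of_not_ge hab)).neg
    refine this.congr_fun (fun u _ => ?_) measurableSet_Ioi
    simp only [Pi.neg_apply]; ring
  have h0 : IntegrableOn (fun u : ℝ => (b - a) * Real.exp (-a * u)) (Set.Ioi 0) :=
    (exp_neg_integrableOn_Ioi 0 ha).const_mul _
  refine Integrable.mono' h0 (Measurable.aestronglyMeasurable (by fun_prop)) ?_
  refine (ae_restrict_iff' measurableSet_Ioi).2 (ae_of_all _ fun u (hu : 0 < u) => ?_)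
  have h1 : Real.exp (-(b * u)) ≤ Real.exp (-(a * u)) := by
    apply Real.exp_le_exp.2; nlinarith
  rw [Real.norm_eq_abs, abs_of_nonneg (mul_nonneg (by positivity) (by linarith)),
    inv_mul_le_iff₀ hu]
  have h2 : Real.exp (-(b * u)) = Real.exp (-(a * u)) * Real.exp (-((b - a) * u)) := by
    rw [← Real.exp_add]; congr 1; ring
  have h3 := Real.add_one_le_exp (-((b - a) * u))
  rw [h2, neg_mul]
  have := Real.exp_pos (-(a * u))
  nlinarith

lemma frul (a b : ℝ) (ha : 0 < a) (hb : 0 < b) :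
    ∫ u in Set.Ioi (0 : ℝ), u⁻¹ * (Real.exp (-(a * u)) - Real.exp (-(b * u))) =
      Real.log b - Real.log a := by
  have hc : Continuous (fun u : ℝ => Real.exp (-u)) := by fun_prop
  have := Frullani.integral_Ioi_eq (f := fun u : ℝ => Real.exp (-u)) (L := 1) (R := 0)
    (hc.locallyIntegrable.locallyIntegrableOn _) ha hb
    (by simpa using (hc.tendsto 0).mono_left nhdsWithin_le_nhds)
    Real.tendsto_exp_neg_atTop_nhds_zero (by simpa using frul_int a b ha hb)
  simp only [smul_eq_mul, sub_zero, mul_one] at this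
  rw [this, Real.log_div hb.ne' ha.ne']

/-! The kernel -/

noncomputable def B (z u : ℝ) : ℝ :=
  (1 - Real.exp (-(z * u))) - z * (1 - Real.exp (-u)) + z * (z - 1) / 2 * (1 - Real.exp (-u)) ^ 2

lemma nonneg_of_deriv {f f' : ℝ → ℝ} (h0 : f 0 = 0) (hd : ∀ u, HasDerivAt f (f' u) u)
    (h : ∀ u, 0 < u → 0 ≤ f' u) : ∀ u, 0 < u → 0 ≤ f u := by
  intro u hu
  have : MonotoneOn f (Set.Ici 0) := by
    apply monotoneOn_of_deriv_nonneg (convex_Ici 0)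
    · exact fun x _ => (hd x).continuousAt.continuousWithinAt
    · exact fun x _ => (hd x).differentiableAt.differentiableWithinAt
    · intro x hx
      rw [interior_Ici] at hx
      rw [(hd x).deriv]; exact h x hx
  rw [← h0]
  exact this (Set.mem_Ici.2 le_rfl) hu.le hu.le

lemma hexp (c u : ℝ) : HasDerivAt (fun u : ℝ => Real.exp (-(c * u))) (-c * Real.exp (-(c * u))) u := by
  have := ((hasDerivAt_id u).const_mul c).neg.exp
  simpa [mul_comm] using this

lemma hexp1 (u : ℝ) : HasDerivAt (fun u : ℝ => Real.exp (-u)) (-Real.exp (-u)) u := by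
  have := (hasDerivAt_id u).neg.exp
  simpa [mul_comm] using this

lemma D_nonneg (c u : ℝ) (hu : 0 < u) : 0 ≤ c * (1 - Real.exp (-(c * u))) := by
  rcases le_total 0 c with h | h
  · have : Real.exp (-(c * u)) ≤ 1 := Real.exp_le_one_iff.2 (by nlinarith)
    nlinarith
  · have : 1 ≤ Real.exp (-(c * u)) := Real.one_le_exp (by nlinarith)
    nlinarith

lemma C_nonneg (z : ℝ) : ∀ u, 0 < u → 0 ≤ (z - 1) * (z - 2) *
    (Real.exp (-((z - 1) * u)) - 1 + (z - 1) * (1 - Real.exp (-u))) := by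
  apply nonneg_of_deriv (f' := fun u => (z - 1) ^ 2 * Real.exp (-u) *
    ((z - 2) * (1 - Real.exp (-((z - 2) * u)))))
  · simp
  · intro u
    have := ((((hexp (z - 1) u).sub_const 1).add
      (((hexp1 u).const_sub 1).const_mul (z - 1)))).const_mul ((z - 1) * (z - 2))
    refine this.congr_deriv ?_
    have e : Real.exp (-((z - 1) * u)) = Real.exp (-u) * Real.exp (-((z - 2) * u)) := by
      rw [← Real.exp_add]; congr 1; ring
    rw [e]; ring
  · intro u hu
    exact mul_nonneg (by positivity) (D_nonneg _ u hu)

lemma B_nonneg (z : ℝ) : ∀ u, 0 < u → 0 ≤ z * (z - 1) * (z - 2) * B z u := by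
  apply nonneg_of_deriv (f' := fun u => z ^ 2 * Real.exp (-u) * ((z - 1) * (z - 2) *
    (Real.exp (-((z - 1) * u)) - 1 + (z - 1) * (1 - Real.exp (-u)))))
  · simp [B]
  · intro u
    have := ((((hexp z u).const_sub 1).sub (((hexp1 u).const_sub 1).const_mul z)).add
      ((((hexp1 u).const_sub 1).pow 2).const_mul (z * (z - 1) / 2))).const_mul
        (z * (z - 1) * (z - 2))
    refine this.congr_deriv ?_
    have e : Real.exp (-(z * u)) = Real.exp (-u) * Real.exp (-((z - 1) * u)) := by
      rw [← Real.exp_add]; congr 1; ring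
    rw [e]; simp; ring
  · intro u hu
    exact mul_nonneg (by positivity) (C_nonneg _ u hu)

lemma B_sign (z : ℝ) : (∀ u, 0 < u → 0 ≤ B z u) ∨ (∀ u, 0 < u → B z u ≤ 0) := by
  rcases lt_trichotomy (z * (z - 1) * (z - 2)) 0 with h | h | h
  · right; intro u hu
    have := B_nonneg z u hu
    by_contra hh
    push Not at hh
    nlinarith
  · left; intro u hu
    have : B z u = 0 := by
      rcases mul_eq_zero.1 h with h | h
      · rcases mul_eq_zero.1 h with h | h
        · simp [B, h]
        · have : z = 1 := by linarith
          simp [B, this]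
      · have : z = 2 := by linarith
        have e : Real.exp (-(2 * u)) = Real.exp (-u) ^ 2 := by
          rw [← Real.exp_nat_mul]; congr 1; push_cast; ring
        rw [B, this, e]; ring
    rw [this]
  · left; intro u hu
    exact nonneg_of_mul_nonneg_right (B_nonneg z u hu) h

noncomputable def K (z : ℝ) (n : ℕ) (u : ℝ) : ℝ :=
  ((n : ℝ) + 1) * (Real.exp (-u) ^ (n + 1) * (B z u / u))

noncomputable def R (m w u : ℝ) : ℝ := u⁻¹ * (Real.exp (-(m * u)) - Real.exp (-((m + w) * u)))

lemma K_eq (z : ℝ) (n : ℕ) (u : ℝ) : K z n u =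
    ((n : ℝ) + 1) * (R (n + 1) z u - z * R (n + 1) 1 u - z * (z - 1) / 2 *
      (R (n + 1) 2 u - 2 * R (n + 1) 1 u)) := by
  have e0 : Real.exp (-u) ^ (n + 1) = Real.exp (-(((n : ℝ) + 1) * u)) := by
    rw [← Real.exp_nat_mul]; congr 1; push_cast; ring
  have e1 : ∀ w, Real.exp (-(((n : ℝ) + 1 + w) * u)) =
    Real.exp (-(((n : ℝ) + 1) * u)) * Real.exp (-(w * u)) := by
    intro w; rw [← Real.exp_add]; congr 1; ring
  have e2 : Real.exp (-(2 * u)) = Real.exp (-u) ^ 2 := by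
    rw [← Real.exp_nat_mul]; congr 1; push_cast; ring
  rw [K, R, R, R, e0, e1, e1, e1, e2, B, one_mul, div_eq_mul_inv _ u]
  ring

lemma R_int (n : ℕ) (w : ℝ) (hw : -1 < w) : IntegrableOn (R ((n : ℝ) + 1) w) (Set.Ioi 0) := by
  have : (0 : ℝ) ≤ n := by positivity
  exact frul_int _ _ (by linarith) (by linarith)

lemma R_integral (n : ℕ) (w : ℝ) (hw : -1 < w) :
    ∫ u in Set.Ioi (0 : ℝ), R ((n : ℝ) + 1) w u = Real.log (1 + w / (n + 1)) := by
  have : (0 : ℝ) ≤ n := by positivity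
  rw [log_one_add_div n w hw]
  exact frul _ _ (by linarith) (by linarith)

lemma K_int (z : ℝ) (hz : -1 < z) (n : ℕ) : IntegrableOn (K z n) (Set.Ioi 0) := by
  have h := (((R_int n z hz).sub ((R_int n 1 (by norm_num)).const_mul z)).sub
    (((R_int n 2 (by norm_num)).sub ((R_int n 1 (by norm_num)).const_mul 2)).const_mul
      (z * (z - 1) / 2))).const_mul ((n : ℝ) + 1)
  exact h.congr (ae_of_all _ fun u => (K_eq z n u).symm)

noncomputable def A (z : ℝ) (n : ℕ) : ℝ := T z n - z * T 1 n - z * (z - 1) / 2 * (T 2 n - 2 * T 1 n)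

lemma K_integral (z : ℝ) (hz : -1 < z) (n : ℕ) :
    ∫ u in Set.Ioi (0 : ℝ), K z n u = A z n := by
  simp only [K_eq]
  have h1 := R_int n z hz
  have h2 := R_int n 1 (by norm_num)
  have h3 := R_int n 2 (by norm_num)
  have h4 : IntegrableOn (fun u => z * R ((n : ℝ) + 1) 1 u) (Set.Ioi 0) := h2.const_mul z
  have h5 : IntegrableOn (fun u => 2 * R ((n : ℝ) + 1) 1 u) (Set.Ioi 0) := h2.const_mul 2
  have h6 : IntegrableOn (fun u => R ((n : ℝ) + 1) z u - z * R ((n : ℝ) + 1) 1 u) (Set.Ioi 0) :=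
    h1.sub h4
  have h7 : IntegrableOn (fun u => z * (z - 1) / 2 *
      (R ((n : ℝ) + 1) 2 u - 2 * R ((n : ℝ) + 1) 1 u)) (Set.Ioi 0) := (h3.sub h5).const_mul _
  rw [integral_const_mul, integral_sub h6 h7, integral_sub h1 h4, integral_const_mul,
    integral_const_mul, integral_sub h3 h5, integral_const_mul, R_integral n z hz,
    R_integral n 1 (by norm_num), R_integral n 2 (by norm_num), A, T, T, T]
  field_simp
  ring

lemma summable_A (z : ℝ) : Summable (A z) :=
  ((summable_T z).sub ((summable_T 1).mul_left z)).sub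
    (((summable_T 2).sub ((summable_T 1).mul_left 2)).mul_left _)

lemma tsum_A (z : ℝ) : ∑' n, A z n = ∑' n, T z n - z * ∑' n, T 1 n - z * (z - 1) / 2 *
    (∑' n, T 2 n - 2 * ∑' n, T 1 n) :=
  (((summable_T z).hasSum.sub ((summable_T 1).hasSum.mul_left z)).sub
    (((summable_T 2).hasSum.sub ((summable_T 1).hasSum.mul_left 2)).mul_left _)).tsum_eq

lemma summable_norm (z : ℝ) (hz : -1 < z) :
    Summable fun n => ∫ u in Set.Ioi (0 : ℝ), ‖K z n u‖ := by
  rcases B_sign z with h | h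
  · refine (summable_A z).congr fun n => ?_
    rw [← K_integral z hz n]
    refine setIntegral_congr_fun measurableSet_Ioi fun u (hu : 0 < u) => ?_
    have : 0 ≤ K z n u := by
      have := h u hu
      rw [K]; positivity
    exact (Real.norm_of_nonneg this).symm
  · refine (summable_A z).neg.congr fun n => ?_
    rw [← K_integral z hz n, ← integral_neg]
    refine setIntegral_congr_fun measurableSet_Ioi fun u (hu : 0 < u) => ?_
    have : K z n u ≤ 0 := by
      have := div_nonpos_of_nonpos_of_nonneg (h u hu) hu.le
      rw [K, ← mul_assoc]
      exact mul_nonpos_of_nonneg_of_nonpos (by positivity) this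
    exact (Real.norm_of_nonpos this).symm

lemma tsum_K (z u : ℝ) (hu : 0 < u) : ∑' n, K z n u = (Real.exp (-u) / u) *
          (z * (z - 1) / 2 - z / (1 - Real.exp (-u)) +
            (1 - Real.exp (-(z * u))) / (1 - Real.exp (-u)) ^ 2) := by
  have hq : Real.exp (-u) < 1 := by
    rw [← Real.exp_zero]; exact Real.exp_lt_exp.2 (by linarith)
  have h := hasSum_coe_mul_geometric_of_norm_lt_one (r := Real.exp (-u))
    (by rwa [Real.norm_of_nonneg (Real.exp_pos _).le])
  have h' := ((hasSum_nat_add_iff' 1).2 h).mul_right (B z u / u)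
  have e : ∀ n, K z n u = ((n + 1 : ℕ) : ℝ) * Real.exp (-u) ^ (n + 1) * (B z u / u) := by
    intro n; rw [K]; push_cast; ring
  simp only [e]
  rw [h'.tsum_eq, B]
  have : 1 - Real.exp (-u) ≠ 0 := by linarith
  simp only [Finset.sum_range_one, Nat.cast_zero, zero_mul, sub_zero]
  field_simp
  ring

end DGaux

open MeasureTheory in
theorem log_doubleGamma_integral (x : ℝ) (hx : 0 < x) :
    Real.log (doubleGamma x) =
      ∫ u in Set.Ioi (0 : ℝ),
        (Real.exp (-u) / u) *
          ((x - 1) * (x - 2) / 2 - (x - 1) / (1 - Real.exp (-u)) +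
            (1 - Real.exp (-(x - 1) * u)) / (1 - Real.exp (-u)) ^ 2) := by
  have hz : -1 < x - 1 := by linarith
  have h := hasSum_integral_of_summable_integral_norm (μ := volume.restrict (Set.Ioi (0 : ℝ)))
    (fun n => DGaux.K_int (x - 1) hz n) (DGaux.summable_norm (x - 1) hz)
  have e : ∫ u in Set.Ioi (0 : ℝ), ∑' n, DGaux.K (x - 1) n u = ∫ u in Set.Ioi (0 : ℝ),
        (Real.exp (-u) / u) *
          ((x - 1) * (x - 2) / 2 - (x - 1) / (1 - Real.exp (-u)) +
            (1 - Real.exp (-(x - 1) * u)) / (1 - Real.exp (-u)) ^ 2) := by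
    refine setIntegral_congr_fun measurableSet_Ioi fun u (hu : 0 < u) => ?_
    have e1 : x - 1 - 1 = x - 2 := by ring
    simp only [DGaux.tsum_K (x - 1) u hu, e1, neg_mul]
  rw [← e, ← h.tsum_eq]
  simp only [DGaux.K_integral (x - 1) hz]
  rw [DGaux.tsum_A, DGaux.log_doubleGamma x hx, DGaux.tsum_T2, DGaux.tsum_T1]
  ring
end

section
/- Stirling-type asymptotics for the double gamma function: as x → +∞ (x real), ln G(x+1) − ( (x/2)·ln(2π) + (x²/2 − 1/12)·ln x − (3/4)x² ) tends to the constant ln( π^{1/6} · G(1/2)^{2/3} / 2^{1/36} ). -/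
open Real

open Filter Topology

noncomputable def dgT (x : ℝ) (n : ℕ) : ℝ :=
  ((n : ℝ) + 1) * Real.log (1 + x / (n + 1)) - x + x ^ 2 / (2 * (n + 1))

noncomputable def dgPhi (y : ℝ) : ℝ := (y ^ 2 / 2 + y / 2 + 1 / 12) * Real.log y - y ^ 2 / 4

noncomputable def dgPsi (y : ℝ) : ℝ := (y + 1 / 2) * Real.log y - y + 1 / (12 * y)

noncomputable def dgH (N : ℕ) : ℝ := ∑ i ∈ Finset.range N, ((i : ℝ) + 1) * Real.log (i + 1)

lemma dg_log_bound {v : ℝ} (hv : |v| ≤ 1 / 2) :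
    |Real.log (1 + v) - v + v ^ 2 / 2| ≤ 2 * |v| ^ 3 := by
  have h := Real.abs_log_sub_add_sum_range_le (x := -v) (by rw [abs_neg]; linarith) 2
  simp only [Finset.sum_range_succ, Finset.sum_range_zero, abs_neg] at h
  norm_num at h
  have e : -v + v ^ 2 / 2 + Real.log (1 + v) = Real.log (1 + v) - v + v ^ 2 / 2 := by ring
  rw [e] at h
  refine h.trans ?_
  rw [div_le_iff₀ (by linarith)]
  have : 0 ≤ |v| ^ 3 := by positivity
  nlinarith

lemma dg_summable (x : ℝ) : Summable (dgT x) := by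
  have hs : Summable (fun n : ℕ => 2 * |x| ^ 3 * (((n + 1 : ℕ) : ℝ) ^ 2)⁻¹) :=
    ((summable_nat_add_iff 1).2 (Real.summable_nat_pow_inv.2 (by norm_num : 1 < 2))).mul_left _
  refine Summable.of_norm_bounded_eventually_nat hs ?_
  obtain ⟨M, hM⟩ := exists_nat_gt (2 * |x|)
  filter_upwards [eventually_ge_atTop M] with n hn
  have hn' : (M : ℝ) ≤ n := by exact_mod_cast hn
  have hp : (0 : ℝ) < n + 1 := by positivity
  have hb := dg_log_bound (v := x / (n + 1)) (by
    rw [abs_div, abs_of_pos hp, div_le_iff₀ hp]; linarith)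
  have e : dgT x n = (n + 1) * (Real.log (1 + x / (n + 1)) - x / (n + 1) + (x / (n + 1)) ^ 2 / 2) := by
    unfold dgT; field_simp
  rw [Real.norm_eq_abs, e, abs_mul, abs_of_pos hp]
  refine (mul_le_mul_of_nonneg_left hb hp.le).trans (le_of_eq ?_)
  rw [abs_div, abs_of_pos hp]; push_cast; field_simp

lemma dg_pos_log (x : ℝ) (hx : -1 < x) : 0 < doubleGamma (x + 1) ∧
    Real.log (doubleGamma (x + 1)) = x / 2 * Real.log (2 * π) - (x + x ^ 2) / 2
      - Real.eulerMascheroniConstant * x ^ 2 / 2 + ∑' n, dgT x n := by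
  have hpos : ∀ n : ℕ, 0 < 1 + x / ((n : ℝ) + 1) := by
    intro n
    have hp : (0 : ℝ) < n + 1 := by positivity
    have : 1 + x / ((n : ℝ) + 1) = (n + 1 + x) / (n + 1) := by field_simp
    rw [this]
    have : (0 : ℝ) ≤ n := by positivity
    apply div_pos _ hp
    linarith
  have hl : ∀ n : ℕ, Real.log ((1 + x / ((n : ℝ) + 1)) ^ (n + 1) *
        Real.exp (-x + x ^ 2 / (2 * (n + 1)))) = dgT x n := by
    intro n
    rw [Real.log_mul (pow_pos (hpos n) _).ne' (Real.exp_pos _).ne', Real.log_exp, Real.log_pow]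
    unfold dgT; push_cast; ring
  have h := Real.rexp_tsum_eq_tprod (f := fun n : ℕ => (1 + x / ((n : ℝ) + 1)) ^ (n + 1) *
        Real.exp (-x + x ^ 2 / (2 * (n + 1))))
    (fun n => mul_pos (pow_pos (hpos n) _) (Real.exp_pos _))
    (by simp only [hl]; exact dg_summable x)
  simp only [hl] at h
  have hG : doubleGamma (x + 1) = (2 * π) ^ (x / 2) *
    Real.exp (-x * (x + 1) / 2 - Real.eulerMascheroniConstant * x ^ 2 / 2) *
      Real.exp (∑' n, dgT x n) := by
    rw [h]; unfold doubleGamma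
    simp only [add_sub_cancel_right]
  have h2 : (0 : ℝ) < (2 * π) ^ (x / 2) := Real.rpow_pos_of_pos (by positivity) _
  refine ⟨by rw [hG]; positivity, ?_⟩
  rw [hG, Real.log_mul (by positivity) (by positivity), Real.log_mul (by positivity) (by positivity),
    Real.log_exp, Real.log_exp, Real.log_rpow (by positivity)]
  ring

lemma dg_log_diff {y : ℝ} (hy : 2 ≤ y) :
    |Real.log y - Real.log (y - 1) - (1 / y + 1 / (2 * y ^ 2) + 1 / (3 * y ^ 3))| ≤ 2 / y ^ 4 := by
  have hy0 : 0 < y := by linarith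
  have hu : |1 / y| = 1 / y := abs_of_pos (by positivity)
  have hu2 : 1 / y ≤ 1 / 2 := one_div_le_one_div_of_le (by norm_num) hy
  have h := Real.abs_log_sub_add_sum_range_le (x := 1 / y) (by rw [hu]; linarith) 3
  simp only [Finset.sum_range_succ, Finset.sum_range_zero, hu] at h
  have e1 : (1 : ℝ) - 1 / y = (y - 1) / y := by field_simp
  have e2 : Real.log (1 - 1 / y) = Real.log (y - 1) - Real.log y := by
    rw [e1, Real.log_div (by linarith) hy0.ne']
  rw [e2] at h
  refine le_trans (le_of_eq ?_) (h.trans ?_)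
  · rw [← abs_neg]; congr 1; push_cast; field_simp; ring
  · rw [div_le_iff₀ (by linarith)]
    have : 0 ≤ 2 / y ^ 4 := by positivity
    have e3 : (1 / y) ^ (3 + 1) = 2 / y ^ 4 * (1 / 2) := by rw [div_pow]; ring
    rw [e3]
    apply mul_le_mul_of_nonneg_left _ this
    linarith

lemma dg_e_bound {y : ℝ} (hy : 2 ≤ y) :
    |dgPhi y - dgPhi (y - 1) - y * Real.log y| ≤ 2 / y ^ 2 := by
  have hy0 : 0 < y := by linarith
  have h := dg_log_diff hy
  set ε := Real.log y - Real.log (y - 1) - (1 / y + 1 / (2 * y ^ 2) + 1 / (3 * y ^ 3)) with hε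
  have hl : Real.log (y - 1) = Real.log y - (1 / y + 1 / (2 * y ^ 2) + 1 / (3 * y ^ 3)) - ε := by
    rw [hε]; ring
  have e : dgPhi y - dgPhi (y - 1) - y * Real.log y =
      (y ^ 2 / 2 - y / 2 + 1 / 12) * ε + (-(1 / 8) + 1 / (36 * y)) / y ^ 2 := by
    unfold dgPhi; rw [hl]; field_simp; ring
  rw [e]
  have hc : |y ^ 2 / 2 - y / 2 + 1 / 12| ≤ y ^ 2 / 2 := by
    rw [abs_le]; constructor <;> nlinarith
  have h1 : |(y ^ 2 / 2 - y / 2 + 1 / 12) * ε| ≤ 1 / y ^ 2 := by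
    rw [abs_mul]
    refine (mul_le_mul hc h (abs_nonneg _) (by positivity)).trans (le_of_eq ?_)
    field_simp
  have hu2 : 1 / (36 * y) ≤ 1 / 72 := one_div_le_one_div_of_le (by norm_num) (by linarith)
  have hu3 : 0 < 1 / (36 * y) := by positivity
  have h2 : |(-(1 / 8) + 1 / (36 * y)) / y ^ 2| ≤ 1 / y ^ 2 := by
    rw [abs_div, abs_of_pos (by positivity : 0 < y ^ 2)]
    gcongr
    rw [abs_le]; constructor <;> linarith
  calc _ ≤ _ := abs_add_le _ _
    _ ≤ 1 / y ^ 2 + 1 / y ^ 2 := add_le_add h1 h2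
    _ = _ := by ring

lemma dg_d_bound {y : ℝ} (hy : 2 ≤ y) :
    |dgPsi y - dgPsi (y - 1) - Real.log y| ≤ 3 / y ^ 3 := by
  have hy0 : 0 < y := by linarith
  have hy1 : 0 < y - 1 := by linarith
  have h := dg_log_diff hy
  set ε := Real.log y - Real.log (y - 1) - (1 / y + 1 / (2 * y ^ 2) + 1 / (3 * y ^ 3)) with hε
  have hl : Real.log (y - 1) = Real.log y - (1 / y + 1 / (2 * y ^ 2) + 1 / (3 * y ^ 3)) - ε := by
    rw [hε]; ring
  have e : dgPsi y - dgPsi (y - 1) - Real.log y =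
      (y - 1 / 2) * ε + (-(1 / 6) - y / (12 * (y - 1))) / y ^ 3 := by
    unfold dgPsi; rw [hl]; field_simp; ring
  rw [e]
  have hc : |y - 1 / 2| ≤ y := by
    rw [abs_le]; constructor <;> linarith
  have h1 : |(y - 1 / 2) * ε| ≤ 2 / y ^ 3 := by
    rw [abs_mul]
    refine (mul_le_mul hc h (abs_nonneg _) (by positivity)).trans (le_of_eq ?_)
    field_simp
  have hu2 : y / (12 * (y - 1)) ≤ 1 / 6 := by
    rw [div_le_iff₀ (by linarith)]; linarith
  have hu3 : 0 < y / (12 * (y - 1)) := by positivity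
  have h2 : |(-(1 / 6) - y / (12 * (y - 1))) / y ^ 3| ≤ 1 / y ^ 3 := by
    rw [abs_div, abs_of_pos (by positivity : 0 < y ^ 3)]
    gcongr
    rw [abs_le]; constructor <;> linarith
  calc _ ≤ _ := abs_add_le _ _
    _ ≤ 2 / y ^ 3 + 1 / y ^ 3 := add_le_add h1 h2
    _ = _ := by ring

lemma dg_H_limit : ∃ c : ℝ, Tendsto (fun N : ℕ => dgH N - dgPhi N) atTop (𝓝 c) := by
  apply cauchySeq_tendsto_of_complete
  apply cauchySeq_of_summable_dist
  have hs : Summable (fun n : ℕ => 2 * (((n + 1 : ℕ) : ℝ) ^ 2)⁻¹) :=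
    ((summable_nat_add_iff 1).2 (Real.summable_nat_pow_inv.2 (by norm_num : 1 < 2))).mul_left _
  refine Summable.of_norm_bounded_eventually_nat hs ?_
  filter_upwards [eventually_ge_atTop 1] with n hn
  have hn' : (1 : ℝ) ≤ n := by exact_mod_cast hn
  have h := dg_e_bound (y := (n : ℝ) + 1) (by linarith)
  rw [Real.norm_eq_abs, abs_of_nonneg dist_nonneg, Real.dist_eq]
  have e : dgH n.succ = dgH n + ((n : ℝ) + 1) * Real.log (n + 1) := by
    unfold dgH; rw [Finset.sum_range_succ]
  rw [e]; push_cast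
  rw [add_sub_cancel_right] at h
  refine le_trans (le_of_eq ?_) (h.trans (le_of_eq ?_))
  · congr 1; push_cast; ring
  · rw [div_eq_mul_inv]

noncomputable def dgE (x : ℝ) (N : ℕ) : ℝ :=
  dgPhi (N + x) - x * dgPsi (N + x) - N * x + x ^ 2 / 2 * (harmonic N : ℝ)

lemma dg_partial {x : ℝ} (hx : 1 ≤ x) (N : ℕ) :
    |∑ n ∈ Finset.range N, dgT x n - (dgE x N - (dgPhi x - x * dgPsi x) - dgH N)|
      ≤ 5 * (1 / x - 1 / (N + x)) := by
  induction N with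
  | zero => simp [dgE, dgH]
  | succ N ih =>
    have hN : (0 : ℝ) ≤ N := by positivity
    set y : ℝ := N + 1 + x with hy
    have hy2 : 2 ≤ y := by linarith
    have hyx : x ≤ y := by linarith
    have he := dg_e_bound hy2
    have hd := dg_d_bound hy2
    have hy1 : y - 1 = N + x := by rw [hy]; ring
    rw [hy1] at he hd
    have e : ∑ n ∈ Finset.range (N + 1), dgT x n -
        (dgE x (N + 1) - (dgPhi x - x * dgPsi x) - dgH (N + 1)) =
        (∑ n ∈ Finset.range N, dgT x n - (dgE x N - (dgPhi x - x * dgPsi x) - dgH N)) +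
        (-(dgPhi y - dgPhi (N + x) - y * Real.log y) +
          x * (dgPsi y - dgPsi (N + x) - Real.log y)) := by
      have hl : Real.log (1 + x / ((N : ℝ) + 1)) = Real.log y - Real.log (N + 1) := by
        rw [← Real.log_div (by linarith) (by positivity)]
        congr 1; rw [hy]; field_simp
      have h3 : ((N + 1 : ℕ) : ℝ) + x = y := by rw [hy]; push_cast; ring
      have h4 : (harmonic (N + 1) : ℝ) = harmonic N + 1 / ((N : ℝ) + 1) := by
        rw [harmonic_succ]; push_cast; simp
      have h5 : dgH (N + 1) = dgH N + ((N : ℝ) + 1) * Real.log (N + 1) := by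
        unfold dgH; rw [Finset.sum_range_succ]
      rw [Finset.sum_range_succ, h5]
      unfold dgE dgT
      rw [hl, h3, h4]
      have hx' : x = y - N - 1 := by rw [hy]; ring
      have hN1 : (N : ℝ) + 1 ≠ 0 := by positivity
      push_cast
      have h6 : x ^ 2 / 2 * (harmonic N + 1 / ((N : ℝ) + 1)) =
        x ^ 2 / 2 * harmonic N + x ^ 2 / (2 * ((N : ℝ) + 1)) := by field_simp
      rw [h6]
      have h7 : y * Real.log y = (N + 1 + x) * Real.log y := by rw [hy]
      rw [h7]
      ring
    rw [e]
    have hy0 : 0 < y := by linarith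
    have hxd : |x * (dgPsi y - dgPsi (N + x) - Real.log y)| ≤ 3 / y ^ 2 := by
      rw [abs_mul, abs_of_pos (by linarith)]
      refine (mul_le_mul hyx hd (abs_nonneg _) hy0.le).trans (le_of_eq ?_)
      field_simp
    have hy10 : 0 < (N : ℝ) + x := by linarith
    have h5 : 5 / y ^ 2 ≤ 5 * (1 / (N + x) - 1 / y) := by
      have : 1 / ((N : ℝ) + x) - 1 / y = 1 / ((y - 1) * y) := by
        rw [← hy1]; rw [← hy1] at hy10; field_simp; ring
      rw [this, mul_one_div]
      rw [← hy1] at hy10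
      apply div_le_div_of_nonneg_left (by norm_num) (by positivity)
      nlinarith
    have h3 : ((N + 1 : ℕ) : ℝ) + x = y := by rw [hy]; push_cast; ring
    rw [h3]
    have hA := abs_add_le (∑ n ∈ Finset.range N, dgT x n - (dgE x N - (dgPhi x - x * dgPsi x) - dgH N)) (-(dgPhi y - dgPhi (N + x) - y * Real.log y) +
          x * (dgPsi y - dgPsi (N + x) - Real.log y))
    have hB := abs_add_le (-(dgPhi y - dgPhi (N + x) - y * Real.log y)) (
          x * (dgPsi y - dgPsi (N + x) - Real.log y))
    rw [abs_neg] at hB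
    have : 5 / y ^ 2 = 2 / y ^ 2 + 3 / y ^ 2 := by ring
    linarith

lemma dg_E_limit {x : ℝ} (hx : 1 ≤ x) :
    Tendsto (fun N : ℕ => dgE x N - dgPhi N) atTop
      (𝓝 (x ^ 2 / 2 + x / 2 + Real.eulerMascheroniConstant * x ^ 2 / 2)) := by
  have hinv : Tendsto (fun N : ℕ => ((N : ℝ))⁻¹) atTop (𝓝 0) :=
    tendsto_inv_atTop_zero.comp tendsto_natCast_atTop_atTop
  have hinvx : Tendsto (fun N : ℕ => ((N : ℝ) + x)⁻¹) atTop (𝓝 0) :=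
    tendsto_inv_atTop_zero.comp
      (tendsto_atTop_add_const_right _ _ tendsto_natCast_atTop_atTop)
  have hw : Tendsto (fun N : ℕ => (N : ℝ) ^ 2 * (Real.log (1 + x / N) - x / N + (x / N) ^ 2 / 2))
      atTop (𝓝 0) := by
    have h0 : Tendsto (fun N : ℕ => 2 * x ^ 3 * ((N : ℝ))⁻¹) atTop (𝓝 0) := by
      simpa using hinv.const_mul (2 * x ^ 3)
    refine squeeze_zero_norm' ?_ h0
    obtain ⟨M, hM⟩ := exists_nat_gt (2 * x)
    filter_upwards [eventually_ge_atTop M] with n hn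
    have hn' : (M : ℝ) ≤ n := by exact_mod_cast hn
    have hp : (0 : ℝ) < n := by linarith
    have ha : |x / n| = x / n := abs_of_pos (by positivity)
    have hb := dg_log_bound (v := x / n) (by
      rw [ha, div_le_iff₀ hp]; linarith)
    rw [Real.norm_eq_abs, abs_mul, abs_of_pos (by positivity : (0 : ℝ) < (n : ℝ) ^ 2)]
    refine (mul_le_mul_of_nonneg_left hb (by positivity)).trans (le_of_eq ?_)
    rw [ha]; field_simp
  have hh := Real.tendsto_harmonic_sub_log
  have hlim := ((hw.const_mul (1 / 2)).add (((hw.mul hinv).add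
      (((hinv.const_mul (-(x ^ 2 / 2))).add_const x))).const_mul (1 / 2))).add
      (((((hw.mul hinv).mul hinv).add (hinv.const_mul x)).add
        ((hinv.mul hinv).const_mul (-(x ^ 2 / 2)))).const_mul (1 / 12 - x ^ 2 / 2))
  have hlim2 := ((hlim.add (hh.const_mul (x ^ 2 / 2))).add (hinvx.const_mul (-(x / 12)))).add_const
    (x ^ 2 / 2)
  refine Tendsto.congr' ?_ (hlim2.trans (le_of_eq ?_))
  · filter_upwards [eventually_ge_atTop 1] with N hN
    have hp : (0 : ℝ) < N := by exact_mod_cast hN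
    have hpx : (0 : ℝ) < N + x := by linarith
    have hl : Real.log (1 + x / (N : ℝ)) = Real.log (N + x) - Real.log N := by
      rw [← Real.log_div (by linarith) (by positivity)]
      congr 1; field_simp
    rw [hl]
    unfold dgE dgPhi dgPsi
    generalize Real.log ((N : ℝ) + x) = a
    generalize Real.log (N : ℝ) = b
    generalize (harmonic N : ℝ) = k
    field_simp
    ring
  · congr 1; ring

lemma dg_real_bound {c : ℝ} (hc : Tendsto (fun N : ℕ => dgH N - dgPhi N) atTop (𝓝 c))
    {x : ℝ} (hx : 1 ≤ x) :
    |Real.log (doubleGamma (x + 1)) - (x / 2 * Real.log (2 * π) + (x ^ 2 / 2 - 1 / 12) * Real.log x -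
            3 / 4 * x ^ 2) - (1 / 12 - c)| ≤ 5 * x⁻¹ := by
  have h1 := (dg_summable x).hasSum.tendsto_sum_nat
  have h2 := (h1.sub (((dg_E_limit hx).sub_const (dgPhi x - x * dgPsi x)).sub hc)).abs
  have h3 := le_of_tendsto h2 (b := 5 * x⁻¹) (Eventually.of_forall (fun N => by
    have h := dg_partial hx N
    have : 0 ≤ 1 / ((N : ℝ) + x) := by positivity
    rw [← one_div]
    refine le_trans (le_of_eq ?_) (h.trans (by linarith))
    congr 1; ring))
  refine le_trans (le_of_eq ?_) h3
  rw [(dg_pos_log x (by linarith)).2]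
  congr 1
  unfold dgPhi dgPsi
  have : x ≠ 0 := by linarith
  field_simp
  ring

lemma dg_half_partial (N : ℕ) : ∑ n ∈ Finset.range N, dgT (-(1 / 2)) n =
    1 / 2 * dgH (2 * N) - 2 * dgH N - N * (N + 1) * Real.log 2
      + 1 / 2 * Real.log ((2 * N).factorial) - 1 / 2 * Real.log (N.factorial)
      - N / 2 * Real.log 2 + N / 2 + 1 / 8 * (harmonic N : ℝ) := by
  induction N with
  | zero => simp [dgH]
  | succ N ih =>
    have h4 : (harmonic (N + 1) : ℝ) = harmonic N + 1 / ((N : ℝ) + 1) := by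
      rw [harmonic_succ]; push_cast; simp
    have h5 : dgH (N + 1) = dgH N + ((N : ℝ) + 1) * Real.log (N + 1) := by
      unfold dgH; rw [Finset.sum_range_succ]
    have hN1 : (0 : ℝ) < (N : ℝ) + 1 := by positivity
    have hN2 : (0 : ℝ) < 2 * (N : ℝ) + 1 := by positivity
    have hl2 : Real.log (2 * (N : ℝ) + 1 + 1) = Real.log 2 + Real.log (N + 1) := by
      rw [← Real.log_mul (by norm_num) hN1.ne']; congr 1; ring
    have h6 : dgH (2 * (N + 1)) = dgH (2 * N) + (2 * (N : ℝ) + 1) * Real.log (2 * N + 1)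
        + (2 * (N : ℝ) + 2) * (Real.log 2 + Real.log (N + 1)) := by
      rw [← hl2]
      unfold dgH
      rw [show 2 * (N + 1) = 2 * N + 1 + 1 by ring, Finset.sum_range_succ, Finset.sum_range_succ]
      push_cast; ring
    have h7 : Real.log ((N + 1).factorial) = Real.log (N + 1) + Real.log (N.factorial) := by
      rw [Nat.factorial_succ]; push_cast
      rw [Real.log_mul hN1.ne' (by positivity)]
    have h8 : Real.log ((2 * (N + 1)).factorial) = Real.log 2 + Real.log (N + 1)
        + Real.log (2 * N + 1) + Real.log ((2 * N).factorial) := by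
      rw [show 2 * (N + 1) = 2 * N + 1 + 1 by ring, Nat.factorial_succ, Nat.factorial_succ]
      push_cast
      rw [Real.log_mul (by positivity) (by positivity), Real.log_mul hN2.ne' (by positivity), hl2]
      ring
    have h9 : Real.log (1 + -(1 / 2) / ((N : ℝ) + 1)) =
        Real.log (2 * N + 1) - Real.log 2 - Real.log (N + 1) := by
      have : 1 + -(1 / 2) / ((N : ℝ) + 1) = (2 * N + 1) / 2 / (N + 1) := by field_simp; ring
      rw [this, Real.log_div (by positivity) hN1.ne', Real.log_div hN2.ne' (by norm_num)]
    rw [Finset.sum_range_succ, ih, h4, h5, h6, h7, h8]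
    unfold dgT
    rw [h9]
    push_cast
    field_simp
    ring

lemma dg_half_s6 {c : ℝ} (hc : Tendsto (fun N : ℕ => dgH N - dgPhi N) atTop (𝓝 c)) :
    Real.log (doubleGamma (1 / 2)) =
      -(1 / 4) * Real.log π + 1 / 24 * Real.log 2 + 1 / 8 - 3 / 2 * c := by
  have h2N : Tendsto (fun N : ℕ => 2 * N) atTop atTop :=
    tendsto_id.const_mul_atTop' (by norm_num)
  have hc2 := hc.comp h2N
  have hpi : (0 : ℝ) < √π := Real.sqrt_pos.2 Real.pi_pos
  have hst := Stirling.tendsto_stirlingSeq_sqrt_pi.log hpi.ne'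
  have hst2 := hst.comp h2N
  have h1 := (dg_summable (-(1 / 2))).hasSum.tendsto_sum_nat
  have hh := Real.tendsto_harmonic_sub_log
  have hlim := ((((hc2.const_mul (1 / 2)).sub (hc.const_mul 2)).add (hst2.const_mul (1 / 2))).sub
    (hst.const_mul (1 / 2))).add ((hh.const_mul (1 / 8)).add_const (7 / 24 * Real.log 2))
  have hlim' : Tendsto (fun N : ℕ => ∑ n ∈ Finset.range N, dgT (-(1 / 2)) n) atTop
      (𝓝 (1 / 2 * c - 2 * c + 1 / 2 * Real.log √π - 1 / 2 * Real.log √π +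
        (1 / 8 * Real.eulerMascheroniConstant + 7 / 24 * Real.log 2))) := by
    refine Tendsto.congr' ?_ hlim
    filter_upwards [eventually_ge_atTop 1] with N hN
    have hp : (0 : ℝ) < N := by exact_mod_cast hN
    rw [dg_half_partial]
    simp only [Function.comp]
    rw [Stirling.log_stirlingSeq_formula, Stirling.log_stirlingSeq_formula]
    unfold dgPhi
    push_cast
    rw [Real.log_div (by positivity) (by positivity), Real.log_div (by positivity) (by positivity),
      Real.log_exp, Real.log_mul (by norm_num) (by positivity : 2 * (N : ℝ) ≠ 0),
      Real.log_mul (by norm_num) hp.ne']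
    ring
  have hu := tendsto_nhds_unique h1 hlim'
  have hg := (dg_pos_log (-(1 / 2)) (by norm_num)).2
  rw [hu] at hg
  rw [show (1 : ℝ) / 2 = -(1 / 2) + 1 by norm_num, hg, Real.log_mul (by norm_num) Real.pi_pos.ne']
  ring

theorem doubleGamma_stirling :
    Tendsto
      (fun x : ℝ =>
        Real.log (doubleGamma (x + 1)) -
          (x / 2 * Real.log (2 * π) + (x ^ 2 / 2 - 1 / 12) * Real.log x -
            3 / 4 * x ^ 2))
      atTop
      (𝓝 (Real.log (π ^ ((1 : ℝ) / 6) * doubleGamma (1 / 2) ^ ((2 : ℝ) / 3) /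
        2 ^ ((1 : ℝ) / 36)))) := by
  obtain ⟨c, hc⟩ := dg_H_limit
  have hG : 0 < doubleGamma (1 / 2) := by
    have := (dg_pos_log (-(1 / 2)) (by norm_num)).1
    rwa [show -(1 / 2) + 1 = (1 : ℝ) / 2 by norm_num] at this
  have hpi := Real.pi_pos
  have hval : Real.log (π ^ ((1 : ℝ) / 6) * doubleGamma (1 / 2) ^ ((2 : ℝ) / 3) /
        2 ^ ((1 : ℝ) / 36)) = 1 / 12 - c := by
    have a1 := Real.rpow_pos_of_pos hpi ((1 : ℝ) / 6)
    have a2 := Real.rpow_pos_of_pos hG ((2 : ℝ) / 3)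
    have a3 := Real.rpow_pos_of_pos (by norm_num : (0 : ℝ) < 2) ((1 : ℝ) / 36)
    rw [Real.log_div (mul_pos a1 a2).ne' a3.ne', Real.log_mul a1.ne' a2.ne', Real.log_rpow hpi,
      Real.log_rpow hG, Real.log_rpow (by norm_num), dg_half_s6 hc]
    ring
  rw [hval, tendsto_iff_norm_sub_tendsto_zero]
  have h0 : Tendsto (fun x : ℝ => 5 * x⁻¹) atTop (𝓝 0) := by
    simpa using tendsto_inv_atTop_zero.const_mul (5 : ℝ)
  refine squeeze_zero' (Eventually.of_forall fun _ => norm_nonneg _) ?_ h0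
  filter_upwards [eventually_ge_atTop 1] with x hx
  exact dg_real_bound hc hx
end

section
/- For every real x with 0 < x < 1, ∫_0^x ln sin(πt) dt = x · ln( sin(πx)/(2π) ) + ln( G(1+x)/G(1−x) ). -/
open Real

theorem aux_hasSum (t : ℝ) (h0 : 0 < t) (h1 : t < 1) :
    HasSum (fun n : ℕ => Real.log (1 - t ^ 2 / ((n : ℝ) + 1) ^ 2))
      (Real.log (Real.sin (π * t)) - Real.log (π * t)) := by
  have hs : 0 < Real.sin (π * t) :=
    Real.sin_pos_of_pos_of_lt_pi (by positivity) (by nlinarith [Real.pi_pos])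
  have hpt : 0 < π * t := by positivity
  have hu : ∀ n : ℕ, 0 ≤ t ^ 2 / ((n : ℝ) + 1) ^ 2 ∧ t ^ 2 / ((n : ℝ) + 1) ^ 2 < 1 := by
    intro n
    have hn : (0 : ℝ) ≤ n := n.cast_nonneg
    refine ⟨by positivity, ?_⟩
    rw [div_lt_one (by positivity)]
    nlinarith
  have key : HasSum (fun n : ℕ => -Real.log (1 - t ^ 2 / ((n : ℝ) + 1) ^ 2))
      (-(Real.log (Real.sin (π * t)) - Real.log (π * t))) := by
    rw [hasSum_iff_tendsto_nat_of_nonneg]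
    · simp only [Finset.sum_neg_distrib]
      refine Filter.Tendsto.neg ?_
      have h := (Real.tendsto_euler_sin_prod t).log hs.ne'
      have h2 := h.sub_const (Real.log (π * t))
      refine h2.congr fun n => ?_
      rw [Real.log_mul hpt.ne', Real.log_prod]
      · ring
      · intro i _
        have := hu i
        linarith
      · refine Finset.prod_ne_zero_iff.2 fun i _ => ?_
        have := hu i
        linarith
    · intro n
      have := hu n
      have := Real.log_nonpos (x := 1 - t ^ 2 / ((n : ℝ) + 1) ^ 2) (by linarith) (by linarith)
      linarith
  simpa using key.neg

theorem aux_integral (a x : ℝ) (ha : 1 ≤ a) (h0 : 0 < x) (h1 : x < 1) :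
    ∫ t in (0 : ℝ)..x, Real.log (1 - t ^ 2 / a ^ 2) =
      x * Real.log (1 - x ^ 2 / a ^ 2) + a * Real.log (1 + x / a) - a * Real.log (1 - x / a)
        - 2 * x := by
  have hb : ∀ t ∈ Set.uIcc 0 x, 0 < a - t ∧ 0 < a + t := by
    intro t ht
    rw [Set.uIcc_of_le h0.le] at ht
    exact ⟨by linarith [ht.2], by linarith [ht.1]⟩
  have ha0 : 0 < a := by linarith
  have hpos : ∀ t ∈ Set.uIcc 0 x, 0 < 1 - t / a ∧ 0 < 1 + t / a ∧ 0 < 1 - t ^ 2 / a ^ 2 := by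
    intro t ht
    obtain ⟨h, h'⟩ := hb t ht
    have e1 : 1 - t / a = (a - t) / a := by field_simp
    have e2 : 1 + t / a = (a + t) / a := by field_simp
    have e3 : 1 - t ^ 2 / a ^ 2 = (1 - t / a) * (1 + t / a) := by field_simp; ring
    have p1 : 0 < 1 - t / a := by rw [e1]; positivity
    have p2 : 0 < 1 + t / a := by rw [e2]; positivity
    exact ⟨p1, p2, by rw [e3]; positivity⟩
  have := intervalIntegral.integral_eq_sub_of_hasDerivAt (a := 0) (b := x)
    (f := fun t => t * Real.log (1 - t ^ 2 / a ^ 2) + a * Real.log (1 + t / a)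
      - a * Real.log (1 - t / a) - 2 * t) (f' := fun t => Real.log (1 - t ^ 2 / a ^ 2)) ?_ ?_
  · rw [this]; simp
  · intro t ht
    obtain ⟨p1, p2, p3⟩ := hpos t ht
    obtain ⟨q1, q2⟩ := hb t ht
    have d3 := ((((hasDerivAt_id t).pow 2).div_const (a ^ 2)).const_sub 1).log p3.ne'
    have d2 := (((hasDerivAt_id t).div_const a).const_add 1).log p2.ne'
    have d1 := (((hasDerivAt_id t).div_const a).const_sub 1).log p1.ne'
    have d := ((((hasDerivAt_id t).mul d3).add (d2.const_mul a)).sub (d1.const_mul a)).sub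
      ((hasDerivAt_id t).const_mul 2)
    convert! d using 1
    have e1 : 1 - t / a = (a - t) / a := by field_simp
    have e2 : 1 + t / a = (a + t) / a := by field_simp
    have e3 : 1 - t ^ 2 / a ^ 2 = (a - t) * (a + t) / a ^ 2 := by field_simp; ring
    simp only [id, Pi.pow_apply]
    have : t * (-(2 * t / a ^ 2) / (1 - t ^ 2 / a ^ 2)) + a * (1 / a / (1 + t / a))
      - a * (-(1 / a) / (1 - t / a)) - 2 = 0 := by
      rw [e1, e2, e3]; field_simp; ring
    norm_num
    norm_num at this
    linarith
  · refine ContinuousOn.intervalIntegrable ?_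
    refine ContinuousOn.log (by fun_prop) fun t ht => (hpos t ht).2.2.ne'

theorem aux_summable (z : ℝ) (hz : |z| < 1) :
    Summable (fun n : ℕ => ((n : ℝ) + 1) * Real.log (1 + z / (n + 1))
      + (-z + z ^ 2 / (2 * (n + 1)))) := by
  have hs : Summable (fun n : ℕ => (|z| ^ 3 / (1 - |z|)) * (1 / ((n : ℝ) + 1) ^ 2)) := by
    refine Summable.mul_left _ ?_
    have := (summable_nat_add_iff 1).2 (Real.summable_one_div_nat_pow.2 (one_lt_two))
    simpa using this
  refine Summable.of_norm_bounded hs fun n => ?_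
  have hn : (0 : ℝ) < (n : ℝ) + 1 := by positivity
  set a : ℝ := (n : ℝ) + 1 with hadef
  have ha1 : 1 ≤ a := by rw [hadef]; linarith [(n.cast_nonneg : (0 : ℝ) ≤ n)]
  have hle : |z| / a ≤ |z| := div_le_self (abs_nonneg _) ha1
  have habs : |-z / a| = |z| / a := by rw [abs_div, abs_neg, abs_of_pos hn]
  have h := Real.abs_log_sub_add_sum_range_le (x := -z / a) (by rw [habs]; linarith) 2
  have e : a * Real.log (1 + z / a) + (-z + z ^ 2 / (2 * a))
    = a * ((∑ i ∈ Finset.range 2, (-z / a) ^ (i + 1) / ((i : ℝ) + 1)) + Real.log (1 - -z / a)) := by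
    rw [show 1 - -z / a = 1 + z / a by ring]
    simp [Finset.sum_range_succ]
    field_simp
    ring
  rw [e, Real.norm_eq_abs, abs_mul, abs_of_pos hn]
  rw [habs] at h
  calc _ ≤ a * ((|z| / a) ^ (2 + 1) / (1 - |z| / a)) := by gcongr
    _ ≤ a * ((|z| / a) ^ (2 + 1) / (1 - |z|)) := by
        have : 0 < 1 - |z| := by linarith
        gcongr
    _ = _ := by
        have : 1 - |z| ≠ 0 := by linarith
        rw [div_pow]
        field_simp

theorem aux_log_doubleGamma (z : ℝ) (hz : |z| < 1) :
    0 < doubleGamma (1 + z) ∧ Real.log (doubleGamma (1 + z)) =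
      z / 2 * Real.log (2 * π) + (-z * (1 + z) / 2 - Real.eulerMascheroniConstant * z ^ 2 / 2)
      + ∑' n : ℕ, (((n : ℝ) + 1) * Real.log (1 + z / (n + 1))
      + (-z + z ^ 2 / (2 * (n + 1)))) := by
  have hp : (∏' n : ℕ, ((1 + z / ((n : ℝ) + 1)) ^ (n + 1) *
        Real.exp (-z + z ^ 2 / (2 * (n + 1))))) = Real.exp (∑' n : ℕ,
        (((n : ℝ) + 1) * Real.log (1 + z / (n + 1)) + (-z + z ^ 2 / (2 * (n + 1))))) := by
    refine HasProd.tprod_eq ?_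
    have h := (aux_summable z hz).hasSum.rexp
    refine h.congr_fun ?_ 
    intro n
    have hn : (1 : ℝ) ≤ (n : ℝ) + 1 := by linarith [(n.cast_nonneg : (0 : ℝ) ≤ n)]
    have : 0 < 1 + z / ((n : ℝ) + 1) := by
      have : 1 + z / ((n : ℝ) + 1) = ((n : ℝ) + 1 + z) / (n + 1) := by field_simp
      rw [this]
      have := (abs_lt.1 hz).1
      apply div_pos <;> linarith
    simp only [Function.comp]
    have e := Real.exp_nat_mul (Real.log (1 + z / ((n : ℝ) + 1))) (n + 1)
    rw [Real.exp_log this] at e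
    push_cast at e
    rw [Real.exp_add (((n : ℝ) + 1) * _), e]
  have hpi : 0 < 2 * π := by positivity
  unfold doubleGamma
  simp only [add_sub_cancel_left]
  rw [hp]
  refine ⟨by positivity, ?_⟩
  rw [Real.log_mul (by positivity) (by positivity), Real.log_mul (by positivity) (by positivity),
    Real.log_exp, Real.log_exp, Real.log_rpow hpi]

theorem integral_log_sin_eq (x : ℝ) (hx0 : 0 < x) (hx1 : x < 1) :
    ∫ t in (0 : ℝ)..x, Real.log (Real.sin (π * t)) =
      x * Real.log (Real.sin (π * x) / (2 * π)) +
        Real.log (doubleGamma (1 + x) / doubleGamma (1 - x)) := by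
  have hs : 0 < Real.sin (π * x) :=
    Real.sin_pos_of_pos_of_lt_pi (by positivity) (by nlinarith [Real.pi_pos])
  have hxa : |x| < 1 := by rwa [abs_of_pos hx0]
  have hxb : |-x| < 1 := by rwa [abs_neg]
  obtain ⟨g1, l1⟩ := aux_log_doubleGamma x hxa
  obtain ⟨g2, l2⟩ := aux_log_doubleGamma (-x) hxb
  have s1 := (aux_summable x hxa).hasSum
  have s2 := (aux_summable (-x) hxb).hasSum
  rw [← sub_eq_add_neg] at g2 l2
  have hI : ∫ t in (0 : ℝ)..x, (Real.log (Real.sin (π * t)) - Real.log (π * t)) =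
      (∫ t in (0 : ℝ)..x, Real.log (Real.sin (π * t))) - (x * Real.log (π * x) - x) := by
    rw [intervalIntegral.integral_sub]
    · congr 1
      rw [intervalIntegral.integral_comp_mul_left (fun t => Real.log t) Real.pi_ne_zero]
      simp [integral_log]
      field_simp
    · have := (intervalIntegrable_log_sin (a := π * 0) (b := π * x)).comp_mul_left (c := π)
      simpa using this
    · have := (intervalIntegral.intervalIntegrable_log' (a := π * 0) (b := π * x)).comp_mul_left (c := π)
      simpa using this
  have hsum := intervalIntegral.hasSum_integral_of_dominated_convergence (a := 0) (b := x)
    (μ := MeasureTheory.volume)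
    (F := fun (n : ℕ) t => Real.log (1 - t ^ 2 / ((n : ℝ) + 1) ^ 2))
    (f := fun t => Real.log (Real.sin (π * t)) - Real.log (π * t))
    (fun n _ => -Real.log (1 - x ^ 2 / ((n : ℝ) + 1) ^ 2))
    (fun n => Measurable.aestronglyMeasurable (by fun_prop))
    (fun n => Filter.Eventually.of_forall fun t ht => by
      rw [Set.uIoc_of_le hx0.le] at ht
      have hn : (0 : ℝ) ≤ n := n.cast_nonneg
      have h1 : x ^ 2 / ((n : ℝ) + 1) ^ 2 < 1 := by
        rw [div_lt_one (by positivity)]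
        nlinarith
      have h2 : t ^ 2 / ((n : ℝ) + 1) ^ 2 ≤ x ^ 2 / ((n : ℝ) + 1) ^ 2 := by
        have := ht.1.le
        have := ht.2
        gcongr
      have h3 : 0 ≤ t ^ 2 / ((n : ℝ) + 1) ^ 2 := by positivity
      rw [Real.norm_eq_abs, abs_of_nonpos (Real.log_nonpos (by linarith) (by linarith))]
      exact neg_le_neg (Real.log_le_log (by linarith) (by linarith)))
    (Filter.Eventually.of_forall fun t ht => (aux_hasSum x hx0 hx1).summable.neg)
    (by simp)
    (Filter.Eventually.of_forall fun t ht => by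
      rw [Set.uIoc_of_le hx0.le] at ht
      exact aux_hasSum t ht.1 (by linarith [ht.2]))
  have hsum2 := ((aux_hasSum x hx0 hx1).mul_left x).add (s1.sub s2)
  have heq := hsum.unique (hsum2.congr_fun fun n => by
    rw [aux_integral _ x (by linarith [(n.cast_nonneg : (0 : ℝ) ≤ n)]) hx0 hx1]
    rw [neg_div, ← sub_eq_add_neg]
    ring)
  rw [hI] at heq
  rw [Real.log_div g1.ne' g2.ne', l1, l2, Real.log_div hs.ne' (by positivity)]
  linear_combination heq
end
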